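/- A bijective morphism between irreducible complex algebraic varieties (reduced separated schemes of finite type over ℂ) is birational, i.e., it restricts to an isomorphism between dense open subsets. -/

import Mathlib

/-!
Let `k` be algebraically closed. Closed points of a scheme locally of finite type over `k` are its
`k`-points, so injectivity of `f` on closed points says that the diagonal `X ⟶ X ×[Y] X` hits every
closed point. Its range is closed and `X ×[Y] X` is a Jacobson space, so the diagonal is surjective,
i.e. `f` is universally injective (`universallyInjective_of_injOn_closedPoints`). Consequently the
residue field extensions of `f` are purely inseparable, hence trivial in characteristic zero.

Surjectivity on closed points makes `f` dominant, so `f` maps the generic point to the generic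
point, and the previous remark says that the function field of `Y` maps isomorphically onto that of
`X` (`isIso_stalkMap_genericPoint`). The inverse of this map spreads out to a section of `f` over
some nonempty open `V ⊆ Y`. A section of the separated injective morphism `f ⁻¹ V ⟶ V` is a
surjective closed immersion into a reduced scheme, hence an isomorphism
(`isIso_of_section_of_injective`), and so is `f ⁻¹ V ⟶ V`.
-/

open AlgebraicGeometry CategoryTheory CategoryTheory.Limits

universe u

/-- Over an algebraically closed field, a separated morphism, locally of finite type, from a scheme
locally of finite type is universally injective if it is injective on closed points. Separatedness
makes the range of the diagonal closed, so that it suffices to hit the closed points of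
`X ×[Y] X`. -/
lemma universallyInjective_of_injOn_closedPoints {K : Type u} [Field K] [IsAlgClosed K]
    {X Y : Scheme.{u}} (pX : X ⟶ Spec (.of K)) (pY : Y ⟶ Spec (.of K))
    [LocallyOfFiniteType pX] (f : X ⟶ Y) [IsSeparated f]
    [LocallyOfFiniteType f] (hf : f ≫ pY = pX)
    (hinj : Set.InjOn f {x : X | IsClosed ({x} : Set X)}) :
    UniversallyInjective f := by
  rw [UniversallyInjective.iff_diagonal]
  let q : pullback f f ⟶ Spec (.of K) := pullback.fst f f ≫ pX
  have : JacobsonSpace ↥(pullback f f) := LocallyOfFiniteType.jacobsonSpace q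
  have hclosed : IsClosed (Set.range (pullback.diagonal f)) :=
    (pullback.diagonal f).isClosedEmbedding.isClosed_range
  refine ⟨Set.range_eq_univ.mp (Set.univ_subset_iff.mp ?_)⟩
  rw [← closure_closedPoints]
  refine closure_minimal (fun z hz ↦ ?_) hclosed
  let p := pointOfClosedPoint q z hz
  have hp : p ≫ q = 𝟙 _ := pointOfClosedPoint_comp q z hz
  have h₁ : (p ≫ pullback.fst f f) ≫ pX = 𝟙 _ := by simpa [q] using hp
  have h₂ : (p ≫ pullback.snd f f) ≫ pX = 𝟙 _ := by
    rw [← h₁, ← hf]; simp [pullback.condition_assoc]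
  have h : p ≫ pullback.fst f f = p ≫ pullback.snd f f := by
    refine ext_of_apply_closedPoint_eq pX h₁ h₂ (hinj ?_ ?_ ?_)
    · exact (pointEquivClosedPoint pX ⟨_, h₁⟩).2
    · exact (pointEquivClosedPoint pX ⟨_, h₂⟩).2
    · have := congr($(show (p ≫ pullback.fst f f) ≫ f = (p ≫ pullback.snd f f) ≫ f by
        simp [pullback.condition]) (IsLocalRing.closedPoint K))
      exact this
  have h' : p = (p ≫ pullback.fst f f) ≫ pullback.diagonal f := by
    ext1
    · simp
    · simp [h]
  refine ⟨(p ≫ pullback.fst f f) (IsLocalRing.closedPoint K), ?_⟩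
  exact congr($h'.symm (IsLocalRing.closedPoint K)).trans (pointOfClosedPoint_apply q z hz _)

lemma bijective_of_isPurelyInseparable_of_charZero {K L : Type*} [Field K] [Field L] [CharZero K]
    (φ : K →+* L) (hφ : φ.IsPurelyInseparable) : Function.Bijective φ := by
  algebraize [φ]
  have : IsPurelyInseparable K L := hφ
  exact ⟨φ.injective, IsPurelyInseparable.surjective_algebraMap_of_isSeparable K L⟩

/-- A universally injective dominant morphism of integral schemes in characteristic zero induces
an isomorphism of function fields. -/
lemma isIso_stalkMap_genericPoint {X Y : Scheme.{u}} [IsIntegral X] [IsIntegral Y]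
    (f : X ⟶ Y) [UniversallyInjective f] (hη : f (genericPoint X) = genericPoint Y)
    [CharZero (Y.residueField (f (genericPoint X)))] :
    IsIso (f.stalkMap (genericPoint X)) := by
  have htfae : UniversallyInjective f ↔
      Function.Injective f ∧ ∀ x, (f.residueFieldMap x).hom.IsPurelyInseparable :=
    (tfae_universallyInjective f).out 0 2
  have hres : Function.Bijective (f.residueFieldMap (genericPoint X)).hom :=
    bijective_of_isPurelyInseparable_of_charZero _
      ((htfae.mp ‹_›).2 (genericPoint X))
  -- The local rings at the generic points are fields, so they agree with their residue fields.
  have hX : Function.Bijective (X.residue (genericPoint X)).hom :=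
    ⟨RingHom.injective (R := X.functionField) _, X.residue_surjective _⟩
  have hY : Function.Bijective (Y.residue (f (genericPoint X))).hom := by
    rw [hη]
    exact ⟨RingHom.injective (R := Y.functionField) _, Y.residue_surjective _⟩
  have hcomp : Function.Bijective
      ((X.residue (genericPoint X)).hom ∘ (f.stalkMap (genericPoint X)).hom) := by
    rw [← RingHom.coe_comp, ← CommRingCat.hom_comp, ← Scheme.residue_residueFieldMap]
    exact hres.comp hY
  exact (ConcreteCategory.isIso_iff_bijective _).mpr ((hX.of_comp_iff' _).mp hcomp)

/-- A separated injective morphism with reduced source is an isomorphism if it has a section: the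
section is then a surjective closed immersion into a reduced scheme. -/
lemma isIso_of_section_of_injective {X Y : Scheme.{u}} [IsReduced X] (r : X ⟶ Y) [IsSeparated r]
    (hr : Function.Injective r) (s : Y ⟶ X) (hs : s ≫ r = 𝟙 _) : IsIso r := by
  have : IsClosedImmersion (s ≫ r) := by rw [hs]; infer_instance
  have : IsClosedImmersion s := .of_comp s r
  have : Surjective s := ⟨fun x ↦ ⟨r x, hr (by rw [← Scheme.Hom.comp_apply, hs]; simp)⟩⟩
  have : IsIso s := isIso_of_isClosedImmersion_of_surjective s
  have : r = inv s := by rw [← cancel_epi s, hs, IsIso.hom_inv_id]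
  rw [this]; infer_instance

theorem bijective_morphism_birational
    (X Y : Scheme) [IsIntegral X] [IsIntegral Y]
    (pX : X ⟶ Spec (CommRingCat.of ℂ)) (pY : Y ⟶ Spec (CommRingCat.of ℂ))
    [LocallyOfFiniteType pX] [LocallyOfFiniteType pY]
    [QuasiCompact pX] [QuasiCompact pY]
    [IsSeparated pX] [IsSeparated pY]
    (f : X ⟶ Y) (hf : f ≫ pY = pX)
    (hbij : Set.BijOn f.base
      {x : X | IsClosed ({x} : Set X)} {y : Y | IsClosed ({y} : Set Y)}) :
    ∃ (U : X.Opens) (V : Y.Opens), Dense (U : Set X) ∧ Dense (V : Set Y) ∧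
      ∃ e : U.toScheme ≅ V.toScheme, e.hom ≫ V.ι = U.ι ≫ f := by
  have : IsSeparated (f ≫ pY) := hf ▸ inferInstance
  have : LocallyOfFiniteType (f ≫ pY) := hf ▸ inferInstance
  have : IsSeparated f := .of_comp f pY
  have : LocallyOfFiniteType f := locallyOfFiniteType_of_comp f pY
  have : JacobsonSpace Y := LocallyOfFiniteType.jacobsonSpace pY
  have : UniversallyInjective f :=
    universallyInjective_of_injOn_closedPoints pX pY f hf hbij.injOn
  have hdense : DenseRange f := by
    refine Dense.mono ?_ (dense_iff_closure_eq.mpr (closure_closedPoints (X := Y)))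
    exact hbij.surjOn.trans (Set.image_subset_range _ _)
  have hη : f (genericPoint X) = genericPoint Y := by
    refine ((genericPoint_spec Y).eq ?_).symm
    have := (genericPoint_spec X).image f.continuous
    rwa [Set.image_univ, hdense.closure_eq] at this
  have : CharZero (Y.residueField (f (genericPoint X))) :=
    charZero_of_injective_ringHom (R := ℂ)
      (Spec.preimage (Y.fromSpecResidueField (f (genericPoint X)) ≫ pY)).hom.injective
  have := isIso_stalkMap_genericPoint f hη
  -- Spreading out over `Y` itself: the inverse on function fields is a section of `f` over the
  -- generic point of `Y`, and extends to a section over a neighbourhood `V`.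
  obtain ⟨V, hV, g, -, hg⟩ := spread_out_of_isGermInjective' (𝟙 Y) f (x := f (genericPoint X))
    (Spec.map (inv (f.stalkMap (genericPoint X))) ≫ X.fromSpecStalk (genericPoint X)) (by
      simp [← Scheme.SpecMap_stalkMap_fromSpecStalk])
  rw [Category.comp_id] at hg
  have hinj : Function.Injective (f ∣_ V) :=
    have : UniversallyInjective (f ∣_ V) := IsZariskiLocalAtTarget.restrict ‹_› V
    (f ∣_ V).injective
  have hrange : Set.range g ⊆ Set.range (f ⁻¹ᵁ V).ι := by
    rintro _ ⟨v, rfl⟩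
    have hv : g v ∈ f ⁻¹ᵁ V := by
      rw [Scheme.Hom.mem_preimage, ← Scheme.Hom.comp_apply, hg]
      exact v.2
    simpa using hv
  have hiso : IsIso (f ∣_ V) := by
    refine isIso_of_section_of_injective (f ∣_ V) hinj
      (IsOpenImmersion.lift (f ⁻¹ᵁ V).ι g hrange) ?_
    rw [← cancel_mono V.ι, Category.assoc, morphismRestrict_ι, IsOpenImmersion.lift_fac_assoc, hg,
      Category.id_comp]
  refine ⟨f ⁻¹ᵁ V, V, (f ⁻¹ᵁ V).isOpen.dense ⟨genericPoint X, hV⟩, V.isOpen.dense ⟨_, hV⟩,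
    asIso (f ∣_ V), ?_⟩
  simp
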